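/- arXiv:2304.03319 — 2 statements merged into one kernel-verified Lean document; each statement's English description precedes it below -/
import Mathlib

section
/- Let f, f_n : [0,∞) → [0,∞) (n ∈ ℕ) be non-decreasing, unbounded, right-continuous functions with f strictly increasing, and suppose f_n converges to f locally uniformly. Let v, v_n ≥ 0 be real numbers with v_n → v. Then for every y ≥ 0, sup_{0 ≤ x ≤ y} |f_n→((x − v_n)_+) − f→((x − v)_+)| → 0 as n → ∞, where (u)_+ := max(u, 0). -/
open Set Filter Metric Topology

/-- `f : ℝ → ℝ` represents a non-decreasing, unbounded, right-continuous function
`[0,∞) → [0,∞)`: it is nonnegative, monotone, unbounded and right-continuous on `[0,∞)`. -/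
def IsNDRC (f : ℝ → ℝ) : Prop :=
  (∀ s : ℝ, 0 ≤ s → 0 ≤ f s) ∧ MonotoneOn f (Set.Ici 0) ∧
    (∀ M : ℝ, ∃ s : ℝ, 0 ≤ s ∧ M < f s) ∧
    (∀ s : ℝ, 0 ≤ s → ContinuousWithinAt f (Set.Ici s) s)

/-- The right-continuous inverse `f→(x) = inf {t ≥ 0 : f t > x}`. -/
noncomputable def rcInv (f : ℝ → ℝ) (x : ℝ) : ℝ :=
  sInf {t : ℝ | 0 ≤ t ∧ x < f t}

theorem rcInv_le_aux (f : ℝ → ℝ) (x t : ℝ) (ht : 0 ≤ t) (h : x < f t) : rcInv f x ≤ t :=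
  csInf_le ⟨0, fun _ hs => hs.1⟩ ⟨ht, h⟩

theorem rcInv_nonneg_aux (f : ℝ → ℝ) (x : ℝ) : 0 ≤ rcInv f x :=
  Real.sInf_nonneg (fun _ hs => hs.1)

theorem lt_rcInv_add_aux (f : ℝ → ℝ) (hf : IsNDRC f) (x e : ℝ) (he : 0 < e) :
    x < f (rcInv f x + e) := by
  obtain ⟨s, hs0, hs⟩ := hf.2.2.1 x
  obtain ⟨t, ht, hlt⟩ := exists_lt_of_csInf_lt (s := {t : ℝ | 0 ≤ t ∧ x < f t}) ⟨s, hs0, hs⟩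
    (show rcInv f x < rcInv f x + e by linarith)
  have h0 := rcInv_nonneg_aux f x
  exact lt_of_lt_of_le ht.2 (hf.2.1 ht.1 (show (0:ℝ) ≤ _ by linarith) hlt.le)

theorem gap_aux (f : ℝ → ℝ) (hstrict : StrictMonoOn f (Set.Ici 0)) (e T : ℝ) (he : 0 < e) :
    ∃ d > 0, ∀ t, 0 ≤ t → t ≤ T → f t + d ≤ f (t + e) := by
  have key : ∀ N : ℕ, ∃ d > 0, ∀ t, 0 ≤ t → t ≤ N * (e / 2) → f t + d ≤ f (t + e) := by
    intro N
    induction N with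
    | zero =>
      refine ⟨f e - f 0, sub_pos.2 (hstrict (by simp) he.le he), ?_⟩
      intro t h0 h1
      have : t = 0 := by
        push_cast at h1
        linarith
      subst this
      simp
    | succ k ih =>
      obtain ⟨d, hd, h⟩ := ih
      have hk : (0:ℝ) ≤ k * (e / 2) := by positivity
      have hgap : f ((k + 1) * (e / 2)) < f ((k + 1) * (e / 2) + e / 2) := by
        refine hstrict (show (0:ℝ) ≤ _ by positivity) (show (0:ℝ) ≤ _ by positivity) (by linarith)
      refine ⟨min d (f ((k + 1) * (e / 2) + e / 2) - f ((k + 1) * (e / 2))),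
        lt_min hd (sub_pos.2 hgap), ?_⟩
      intro t h0 h1
      push_cast at h1
      by_cases hc : t ≤ k * (e / 2)
      · have := h t h0 hc
        have := min_le_left d (f ((k + 1) * (e / 2) + e / 2) - f ((k + 1) * (e / 2)))
        linarith
      · push Not at hc
        have h2 := min_le_right d (f ((k + 1) * (e / 2) + e / 2) - f ((k + 1) * (e / 2)))
        have h3 : f t ≤ f ((k + 1) * (e / 2)) :=
          hstrict.monotoneOn h0 (show (0:ℝ) ≤ _ by positivity) h1
        have h4 : f ((k + 1) * (e / 2) + e / 2) ≤ f (t + e) :=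
          hstrict.monotoneOn (show (0:ℝ) ≤ _ by positivity) (show (0:ℝ) ≤ _ by linarith)
            (by linarith)
        linarith
  obtain ⟨N, hN⟩ := exists_nat_ge (T / (e / 2))
  obtain ⟨d, hd, h⟩ := key N
  refine ⟨d, hd, fun t h0 h1 => h t h0 (h1.trans ?_)⟩
  rwa [div_le_iff₀ (by positivity)] at hN

/-- Let `fn` be non-decreasing, unbounded, right-continuous functions
`[0,∞) → [0,∞)` converging locally uniformly to such a function `f` which is strictly
increasing, and let `vn → v` be nonnegative reals.  Then for every `y ≥ 0`,
`sup_{0 ≤ x ≤ y} |fn→((x − vn)₊) − f→((x − v)₊)| → 0`. -/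
theorem stmt6 (f : ℝ → ℝ) (fn : ℕ → ℝ → ℝ)
    (hf : IsNDRC f) (hfn : ∀ n, IsNDRC (fn n))
    (hstrict : StrictMonoOn f (Set.Ici 0))
    (hconv : ∀ t : ℝ, 0 ≤ t → TendstoUniformlyOn fn f atTop (Set.Icc 0 t))
    (v : ℝ) (vn : ℕ → ℝ) (hv : 0 ≤ v) (hvn : ∀ n, 0 ≤ vn n)
    (hvconv : Tendsto vn atTop (𝓝 v)) :
    ∀ y : ℝ, 0 ≤ y →
      TendstoUniformlyOn (fun n x => rcInv (fn n) (max (x - vn n) 0))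
        (fun x => rcInv f (max (x - v) 0)) atTop (Set.Icc 0 y) := by
  intro y hy
  rw [Metric.tendstoUniformlyOn_iff]
  intro ε hε
  obtain ⟨e, he, hee⟩ : ∃ e > 0, 2 * e < ε := ⟨ε / 4, by positivity, by linarith⟩
  obtain ⟨T, hT0, hT⟩ := hf.2.2.1 y
  obtain ⟨d, hd, hgap⟩ := gap_aux f hstrict e (T + 3 * e) he
  have h1 := (Metric.tendstoUniformlyOn_iff.1 (hconv (T + 4 * e) (by positivity))) (d / 4)
    (by positivity)
  have h2 := Metric.tendsto_nhds.1 hvconv (d / 4) (by positivity)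
  filter_upwards [h1, h2] with n hn hvn' x hx
  rw [Real.dist_eq] at hvn'
  have hab : |max (x - vn n) 0 - max (x - v) 0| < d / 4 := by
    refine lt_of_le_of_lt (abs_max_sub_max_le_abs _ _ _) ?_
    rw [show x - vn n - (x - v) = -(vn n - v) by ring, abs_neg]
    exact hvn'
  have hay : max (x - v) 0 ≤ y := max_le (by linarith [hx.2]) hy
  generalize max (x - v) 0 = a at *
  generalize max (x - vn n) 0 = b at *
  have hsT : rcInv f a ≤ T := rcInv_le_aux f a T hT0 (by linarith)
  have hs0 := rcInv_nonneg_aux f a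
  have hr0 := rcInv_nonneg_aux (fn n) b
  have hs := lt_rcInv_add_aux f hf a e he
  have hr := lt_rcInv_add_aux (fn n) (hfn n) b e he
  rw [abs_lt] at hab
  have hup : rcInv (fn n) b ≤ rcInv f a + e + e := by
    apply rcInv_le_aux _ _ _ (by positivity)
    have g := hgap (rcInv f a + e) (by positivity) (by linarith)
    have c := hn (rcInv f a + e + e) ⟨by positivity, by linarith⟩
    rw [Real.dist_eq, abs_lt] at c
    linarith
  have hlo : rcInv f a ≤ rcInv (fn n) b + e + e := by
    apply rcInv_le_aux _ _ _ (by positivity)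
    have g := hgap (rcInv (fn n) b + e) (by positivity) (by linarith)
    have c := hn (rcInv (fn n) b + e) ⟨by positivity, by linarith⟩
    rw [Real.dist_eq, abs_lt] at c
    linarith
  rw [Real.dist_eq, abs_lt]
  constructor <;> linarith
end

section
/- On a probability space, let σ and σ_n (n ∈ ℕ) be stochastic processes indexed by [0,∞) with values in [0,∞) such that, almost surely: each σ_n and σ is non-decreasing, unbounded and right-continuous; σ is strictly increasing; and sup_{0 ≤ s ≤ t} |σ_n(s) − σ(s)| → 0 as n → ∞ for every t ≥ 0. Let V and V_n be nonnegative random variables with V_n → V almost surely. Let L_n = σ_n→ and L = σ→ be the right-continuous inverses and R_n, R the closed ranges of σ_n and σ. Then almost surely: (a) for every y ≥ 0, sup_{0 ≤ x ≤ y} |L_n((x − V_n)_+) − L((x − V)_+)| → 0 as n → ∞; and (b) for every x ≥ 0, ρ(x, V_n + R_n) → ρ(x, V + R) as n → ∞, where V + R := {V + u : u ∈ R}. -/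
open Set Filter Metric Topology MeasureTheory

/-- The closed range `F = closure {f t : t ≥ 0}`. -/
def crange (f : ℝ → ℝ) : Set ℝ := closure (f '' Set.Ici 0)

lemma rc_bdd (f : ℝ → ℝ) (x : ℝ) : BddBelow {t : ℝ | 0 ≤ t ∧ x < f t} :=
  ⟨0, fun _ ht => ht.1⟩

lemma rc_le {f : ℝ → ℝ} {x t : ℝ} (h0 : 0 ≤ t) (h : x < f t) : rcInv f x ≤ t :=
  csInf_le (rc_bdd f x) ⟨h0, h⟩

lemma rc_ge {f : ℝ → ℝ} (hf : IsNDRC f) {x a : ℝ} (h : ∀ t, 0 ≤ t → x < f t → a ≤ t) :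
    a ≤ rcInv f x :=
  le_csInf (hf.2.2.1 x) fun t ht => h t ht.1 ht.2

lemma rc_nonneg {f : ℝ → ℝ} (hf : IsNDRC f) (x : ℝ) : 0 ≤ rcInv f x :=
  rc_ge hf fun _ h _ => h

lemma rc_cont {f : ℝ → ℝ} (hf : IsNDRC f) (hs : StrictMonoOn f (Set.Ici 0)) :
    Continuous (rcInv f) := by
  rw [Metric.continuous_iff']
  intro x ε hε
  have h0 := rc_nonneg hf x
  set t := rcInv f x with ht
  have hup : x < f (t + ε / 2) := by
    by_contra hcon
    push Not at hcon
    have : t + ε / 2 ≤ t := by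
      conv_rhs => rw [ht]
      apply rc_ge hf
      intro s hs0 hxs
      by_contra hlt
      push Not at hlt
      have := hf.2.1 (mem_Ici.2 hs0) (mem_Ici.2 (by linarith : 0 ≤ t + ε / 2)) hlt.le
      linarith
    linarith
  have h1 : ∀ᶠ x' in 𝓝 x, rcInv f x' ≤ t + ε / 2 := by
    filter_upwards [eventually_lt_nhds hup] with x' hx'
    exact rc_le (by linarith) hx'
  have h2 : ∀ᶠ x' in 𝓝 x, t - ε / 2 ≤ rcInv f x' := by
    by_cases hc : t - ε / 2 < 0
    · exact Eventually.of_forall fun x' => by linarith [rc_nonneg hf x']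
    · push Not at hc
      have ha : f (t - ε / 2) < f (t - ε / 4) :=
        hs (mem_Ici.2 hc) (mem_Ici.2 (by linarith)) (by linarith)
      have hb : f (t - ε / 4) ≤ x := by
        by_contra hcon
        push Not at hcon
        have := rc_le (f := f) (by linarith) hcon
        linarith
      filter_upwards [eventually_gt_nhds (lt_of_lt_of_le ha hb)] with x' hx'
      apply rc_ge hf
      intro s hs0 hxs
      by_contra hlt
      push Not at hlt
      have := hf.2.1 (mem_Ici.2 hs0) (mem_Ici.2 hc) hlt.le
      linarith
  filter_upwards [h1, h2] with x' h1 h2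
  rw [Real.dist_eq, abs_lt]
  constructor <;> linarith

lemma det_a {f : ℝ → ℝ} {fn : ℕ → ℝ → ℝ} {v : ℝ} {vn : ℕ → ℝ}
    (hv0 : 0 ≤ v) (hvn0 : ∀ n, 0 ≤ vn n)
    (hf : IsNDRC f) (hfn : ∀ n, IsNDRC (fn n)) (hs : StrictMonoOn f (Set.Ici 0))
    (hu : ∀ t : ℝ, 0 ≤ t → TendstoUniformlyOn fn f atTop (Set.Icc 0 t))
    (hv : Tendsto vn atTop (𝓝 v)) (y : ℝ) (hy : 0 ≤ y) :
    TendstoUniformlyOn (fun n x => rcInv (fn n) (max (x - vn n) 0))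
          (fun x => rcInv f (max (x - v) 0)) atTop (Set.Icc 0 y) := by
  rw [Metric.tendstoUniformlyOn_iff]
  intro η hη
  have huc := (isCompact_Icc (a := (-1 : ℝ)) (b := y + 1)).uniformContinuousOn_of_continuous
    (rc_cont hf hs).continuousOn
  rw [Metric.uniformContinuousOn_iff] at huc
  obtain ⟨δ, hδ, H⟩ := huc η hη
  set ε := min (δ / 3) 1 with hεd
  have hε : 0 < ε := lt_min (by linarith) one_pos
  have hε1 : ε ≤ 1 := min_le_right _ _
  have hεδ : ε ≤ δ / 3 := min_le_left _ _
  obtain ⟨T, hT0, hT⟩ := hf.2.2.1 (y + ε)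
  have e1 := (Metric.tendstoUniformlyOn_iff.1 (hu T hT0)) ε hε
  have e2 := (Metric.tendsto_nhds.1 hv) ε hε
  filter_upwards [e1, e2] with n h1 h2 x hx
  rw [Real.dist_eq, abs_lt] at h2
  have h1' : ∀ t, 0 ≤ t → t ≤ T → f t - fn n t < ε ∧ -ε < f t - fn n t := by
    intro t ht ht'
    have := h1 t ⟨ht, ht'⟩
    rw [Real.dist_eq, abs_lt] at this
    exact ⟨this.2, this.1⟩
  set u := max (x - vn n) 0 with hud
  set w := max (x - v) 0 with hwd
  have hn := hvn0 n
  have hu0 : 0 ≤ u := le_max_right _ _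
  have hw0 : 0 ≤ w := le_max_right _ _
  have huy : u ≤ y := max_le (by linarith [hx.2]) hy
  have hwy : w ≤ y := max_le (by linarith [hx.2]) hy
  have huw : |u - w| ≤ ε := by
    refine (abs_max_sub_max_le_abs _ _ _).trans ?_
    rw [abs_le]; constructor <;> linarith
  rw [abs_le] at huw
  have up : rcInv (fn n) u ≤ rcInv f (u + ε) := by
    apply rc_ge hf
    intro t ht htu
    have hm : u + ε < f (min t T) := by
      rcases min_choice t T with h | h <;> rw [h] <;> linarith
    have := h1' (min t T) (le_min ht hT0) (min_le_right _ _)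
    exact (rc_le (le_min ht hT0) (by linarith)).trans (min_le_left _ _)
  have lo : rcInv f (u - ε) ≤ rcInv (fn n) u := by
    apply rc_ge (hfn n)
    intro t ht htu
    rcases le_total t T with h | h
    · have := h1' t ht h
      exact rc_le ht (by linarith)
    · exact (rc_le hT0 (by linarith)).trans h
  have A := H w ⟨by linarith, by linarith⟩ (u + ε) ⟨by linarith, by linarith⟩
    (by rw [Real.dist_eq, abs_lt]; constructor <;> linarith)
  have B := H w ⟨by linarith, by linarith⟩ (u - ε) ⟨by linarith, by linarith⟩
    (by rw [Real.dist_eq, abs_lt]; constructor <;> linarith)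
  rw [Real.dist_eq, abs_lt] at *
  constructor <;> linarith

lemma infDist_shift (x v : ℝ) (f : ℝ → ℝ) :
    infDist x ((fun u => v + u) '' crange f) = infDist (x - v) (f '' Ici 0) := by
  have h := Metric.infDist_image (Φ := fun u : ℝ => v + u) (x := x - v) (t := crange f)
    (isometry_add_left v)
  simp only [add_sub_cancel] at h
  rw [h, crange, infDist_closure]

lemma infDist_cmp {g h : ℝ → ℝ} (hg : MonotoneOn g (Ici 0)) {T z ε : ℝ} (hT : 0 ≤ T)
    (hz : z ≤ g T) (hgh : ∀ t, 0 ≤ t → t ≤ T → |g t - h t| ≤ ε) :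
    infDist z (h '' Ici 0) ≤ infDist z (g '' Ici 0) + ε := by
  have hne : (g '' Ici 0).Nonempty := ⟨g 0, 0, mem_Ici.2 le_rfl, rfl⟩
  rw [← sub_le_iff_le_add, le_infDist hne]
  rintro _ ⟨t, ht, rfl⟩
  have hm0 : 0 ≤ min t T := le_min ht hT
  have h1 : infDist z (h '' Ici 0) ≤ dist z (h (min t T)) :=
    infDist_le_dist_of_mem ⟨_, hm0, rfl⟩
  have h2 : dist z (h (min t T)) ≤ dist z (g (min t T)) + dist (g (min t T)) (h (min t T)) :=
    dist_triangle _ _ _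
  have h3 := hgh _ hm0 (min_le_right _ _)
  rw [← Real.dist_eq] at h3
  have h4 : dist z (g (min t T)) ≤ dist z (g t) := by
    rcases le_total t T with h | h
    · rw [min_eq_left h]
    · rw [min_eq_right h, Real.dist_eq, Real.dist_eq, abs_sub_comm, abs_sub_comm z]
      have := hg (mem_Ici.2 hT) ht h
      exact abs_le_abs_of_nonneg (by linarith) (by linarith)
  linarith

lemma det_b {f : ℝ → ℝ} {fn : ℕ → ℝ → ℝ} {v : ℝ} {vn : ℕ → ℝ}
    (hf : IsNDRC f) (hfn : ∀ n, IsNDRC (fn n))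
    (hu : ∀ t : ℝ, 0 ≤ t → TendstoUniformlyOn fn f atTop (Set.Icc 0 t))
    (hv : Tendsto vn atTop (𝓝 v)) (x : ℝ) :
    Tendsto (fun n => Metric.infDist x ((fun u => vn n + u) '' crange (fn n)))
          atTop (𝓝 (Metric.infDist x ((fun u => v + u) '' crange f))) := by
  simp only [infDist_shift]
  rw [Metric.tendsto_nhds]
  intro η hη
  have hε : 0 < η / 3 := by linarith
  obtain ⟨T, hT0, hT⟩ := hf.2.2.1 (x - v + η / 3)
  have e1 := (Metric.tendstoUniformlyOn_iff.1 (hu T hT0)) _ hε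
  have e2 := (Metric.tendsto_nhds.1 hv) _ hε
  filter_upwards [e1, e2] with n h1 h2
  have h1' : ∀ t, 0 ≤ t → t ≤ T → |f t - fn n t| ≤ η / 3 := fun t ht ht' => by
    have := h1 t ⟨ht, ht'⟩
    rw [Real.dist_eq] at this
    exact this.le
  have hfT := abs_le.1 (h1' T hT0 le_rfl)
  have A := infDist_cmp (z := x - v) hf.2.1 hT0 (by linarith) h1'
  have B := infDist_cmp (z := x - v) (hfn n).2.1 hT0 (by linarith)
    (fun t ht ht' => by rw [abs_sub_comm]; exact h1' t ht ht')
  have hd : dist (x - v) (x - vn n) = dist (vn n) v := by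
    rw [Real.dist_eq, Real.dist_eq]; congr 1; ring
  have C := infDist_le_infDist_add_dist (s := fn n '' Ici 0) (x := x - v) (y := x - vn n)
  have D := infDist_le_infDist_add_dist (s := fn n '' Ici 0) (x := x - vn n) (y := x - v)
  rw [dist_comm] at D
  rw [hd] at C D
  rw [Real.dist_eq, abs_lt]
  constructor <;> linarith

/-- On a probability space, let `σ` and `σn` be processes which are,
almost surely, non-decreasing, unbounded and right-continuous on `[0,∞)`, with `σ` strictly
increasing and `σn → σ` locally uniformly.  Let `Vn → V` a.s. be nonnegative random
variables, `Ln`, `L` the right-continuous inverses and `Rn`, `R` the closed ranges of `σn`,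
`σ`.  Then almost surely: (a) for every `y ≥ 0`,
`sup_{0 ≤ x ≤ y} |Ln((x − Vn)₊) − L((x − V)₊)| → 0`; and (b) for every `x ≥ 0`,
`ρ(x, Vn + Rn) → ρ(x, V + R)`. -/
theorem stmt7 {Ω : Type*} [MeasurableSpace Ω] (μ : Measure Ω) [IsProbabilityMeasure μ]
    (σ : Ω → ℝ → ℝ) (σn : ℕ → Ω → ℝ → ℝ) (V : Ω → ℝ) (Vn : ℕ → Ω → ℝ)
    (hmeasσ : ∀ t : ℝ, Measurable fun ω => σ ω t)
    (hmeasσn : ∀ (n : ℕ) (t : ℝ), Measurable fun ω => σn n ω t)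
    (hmeasV : Measurable V) (hmeasVn : ∀ n, Measurable (Vn n))
    (hVpos : ∀ ω, 0 ≤ V ω) (hVnpos : ∀ n ω, 0 ≤ Vn n ω)
    (has : ∀ᵐ ω ∂μ, IsNDRC (σ ω) ∧ (∀ n, IsNDRC (σn n ω)) ∧
      StrictMonoOn (σ ω) (Set.Ici 0) ∧
      (∀ t : ℝ, 0 ≤ t → TendstoUniformlyOn (fun n => σn n ω) (σ ω) atTop (Set.Icc 0 t)))
    (hVconv : ∀ᵐ ω ∂μ, Tendsto (fun n => Vn n ω) atTop (𝓝 (V ω))) :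
    ∀ᵐ ω ∂μ,
      (∀ y : ℝ, 0 ≤ y →
        TendstoUniformlyOn (fun n x => rcInv (σn n ω) (max (x - Vn n ω) 0))
          (fun x => rcInv (σ ω) (max (x - V ω) 0)) atTop (Set.Icc 0 y)) ∧
      (∀ x : ℝ, 0 ≤ x →
        Tendsto (fun n => Metric.infDist x ((fun u => Vn n ω + u) '' crange (σn n ω)))
          atTop (𝓝 (Metric.infDist x ((fun u => V ω + u) '' crange (σ ω))))) := by
  filter_upwards [has, hVconv] with ω h hv
  obtain ⟨hf, hfn, hs, hu⟩ := h
  exact ⟨fun y hy => det_a (hVpos ω) (fun n => hVnpos n ω) hf hfn hs hu hv y hy,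
    fun x _ => det_b hf hfn hu hv x⟩
end
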